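/- Let k be a field, n ≥ 1, K = k(t₁,…,tₙ), and let f ∈ K with f ∉ {0,1} be such that cf is not a square in K for any c ∈ k*. Then δ_K([f] + [f⁻¹]) = f ∧ (−f) ≠ 0 in ∧²K*; in particular [f] + [f⁻¹] does not lie in R_5(K). -/

import Mathlib

open TensorProduct

namespace BlochPaper

/-- `F^♭ = F \ {0,1}`. -/
def Flat (F : Type*) [Field F] : Type _ := {x : F // x ≠ 0 ∧ x ≠ 1}

variable (F : Type*) [Field F]

/-- `ℤ[F^♭]`, the free abelian group on `F^♭`. -/
abbrev ZFlat : Type _ := FreeAbelianGroup (Flat F)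

/-- `F* ⊗_ℤ F*` (written additively). -/
abbrev Tens : Type _ := TensorProduct ℤ (Additive Fˣ) (Additive Fˣ)

/-- relations `x⊗y + y⊗x`. -/
noncomputable def symRel : AddSubgroup (Tens F) :=
  AddSubgroup.closure {z | ∃ x y : Fˣ,
    z = Additive.ofMul x ⊗ₜ[ℤ] Additive.ofMul y + Additive.ofMul y ⊗ₜ[ℤ] Additive.ofMul x}

/-- `∧² F*`. -/
abbrev Wedge : Type _ := Tens F ⧸ symRel F

/-- relations `x⊗y + y⊗x` and `x⊗x - x⊗(-1)`. -/
noncomputable def symRel2 : AddSubgroup (Tens F) :=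
  AddSubgroup.closure
    ({z | ∃ x y : Fˣ,
        z = Additive.ofMul x ⊗ₜ[ℤ] Additive.ofMul y + Additive.ofMul y ⊗ₜ[ℤ] Additive.ofMul x} ∪
     {z | ∃ x : Fˣ,
        z = Additive.ofMul x ⊗ₜ[ℤ] Additive.ofMul x
          - Additive.ofMul x ⊗ₜ[ℤ] Additive.ofMul (-1 : Fˣ)})

/-- `∧~² F*`. -/
abbrev TWedge : Type _ := Tens F ⧸ symRel2 F

variable {F}

/-- `x ∧ y` in `∧² F*`. -/
noncomputable def wedge (x y : Fˣ) : Wedge F :=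
  QuotientAddGroup.mk (Additive.ofMul x ⊗ₜ[ℤ] Additive.ofMul y)

/-- `x ∧~ y` in `∧~² F*`. -/
noncomputable def twedge (x y : Fˣ) : TWedge F :=
  QuotientAddGroup.mk (Additive.ofMul x ⊗ₜ[ℤ] Additive.ofMul y)

/-- `x` as a unit, for `x ∈ F^♭`. -/
def unitsOf (x : Flat F) : Fˣ := Units.mk0 x.1 x.2.1

/-- `1 - x` as a unit, for `x ∈ F^♭`. -/
def unitsOneSub (x : Flat F) : Fˣ :=
  Units.mk0 (1 - x.1) (sub_ne_zero_of_ne (Ne.symm x.2.2))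

variable (F)

/-- Suslin's map `δ_F : ℤ[F^♭] → ∧²F*`, `[x] ↦ x ∧ (1-x)`. -/
noncomputable def dlt : ZFlat F →+ Wedge F :=
  FreeAbelianGroup.lift (fun x : Flat F => wedge (unitsOf x) (unitsOneSub x))

/-- The map `∂_F : ℤ[F^♭] → ∧~²F*`, `[x] ↦ x ∧~ (1-x)`. -/
noncomputable def bd : ZFlat F →+ TWedge F :=
  FreeAbelianGroup.lift (fun x : Flat F => twedge (unitsOf x) (unitsOneSub x))

variable {F}

lemma flat_div (x y : Flat F) (h : x ≠ y) : y.1 / x.1 ≠ 0 ∧ y.1 / x.1 ≠ 1 := by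
  refine ⟨div_ne_zero y.2.1 x.2.1, fun hh => h ?_⟩
  exact Subtype.ext (((div_eq_one_iff_eq x.2.1).mp hh).symm)

lemma flat_sub (x y : Flat F) (h : x ≠ y) :
    (1 - x.1) / (1 - y.1) ≠ 0 ∧ (1 - x.1) / (1 - y.1) ≠ 1 := by
  have hx : (1 : F) - x.1 ≠ 0 := sub_ne_zero_of_ne (Ne.symm x.2.2)
  have hy : (1 : F) - y.1 ≠ 0 := sub_ne_zero_of_ne (Ne.symm y.2.2)
  refine ⟨div_ne_zero hx hy, fun hh => h ?_⟩
  have := (div_eq_one_iff_eq hy).mp hh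
  exact Subtype.ext (by linear_combination -this)

lemma flat_inv (x : Flat F) : x.1⁻¹ ≠ 0 ∧ x.1⁻¹ ≠ 1 :=
  ⟨inv_ne_zero x.2.1, fun hh => x.2.2 (by simpa [inv_eq_one] using hh)⟩

lemma flat_subinv (x y : Flat F) (h : x ≠ y) :
    (1 - x.1⁻¹) / (1 - y.1⁻¹) ≠ 0 ∧ (1 - x.1⁻¹) / (1 - y.1⁻¹) ≠ 1 := by
  have hx : (1 : F) - x.1⁻¹ ≠ 0 := sub_ne_zero_of_ne (Ne.symm (flat_inv x).2)
  have hy : (1 : F) - y.1⁻¹ ≠ 0 := sub_ne_zero_of_ne (Ne.symm (flat_inv y).2)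
  refine ⟨div_ne_zero hx hy, fun hh => h ?_⟩
  have h2 := (div_eq_one_iff_eq hy).mp hh
  have h3 : x.1⁻¹ = y.1⁻¹ := by linear_combination -h2
  exact Subtype.ext (inv_injective h3)

/-- the five-term element `[x] - [y] + [y/x] + [(1-x)/(1-y)] - [(1-x⁻¹)/(1-y⁻¹)]`. -/
noncomputable def fiveEl (x y : Flat F) (h : x ≠ y) : ZFlat F :=
  FreeAbelianGroup.of x - FreeAbelianGroup.of y
    + FreeAbelianGroup.of ⟨y.1 / x.1, flat_div x y h⟩
    + FreeAbelianGroup.of ⟨(1 - x.1) / (1 - y.1), flat_sub x y h⟩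
    - FreeAbelianGroup.of ⟨(1 - x.1⁻¹) / (1 - y.1⁻¹), flat_subinv x y h⟩

/-- the element `[x] + [x⁻¹]`. -/
noncomputable def invEl (x : Flat F) : ZFlat F :=
  FreeAbelianGroup.of x + FreeAbelianGroup.of ⟨x.1⁻¹, flat_inv x⟩

variable (F)

/-- `R_5(F)`. -/
noncomputable def R5 : AddSubgroup (ZFlat F) :=
  AddSubgroup.closure {z | ∃ (x y : Flat F) (h : x ≠ y), z = fiveEl x y h}

/-- `R_{5,2}(F)`. -/
noncomputable def R52 : AddSubgroup (ZFlat F) :=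
  AddSubgroup.closure
    ({z | ∃ (x y : Flat F) (h : x ≠ y), z = fiveEl x y h} ∪
     {z | ∃ x : Flat F, z = invEl x})

end BlochPaper

namespace BlochPaper

/-!
Modulo squares, `Fˣ` is a vector space over the field with two elements. If neither `f` nor `-f`
is a square, some homomorphism `φ : Fˣ → ℤ/2` takes the value `1` on both of them. The bilinear
map `φ(x) φ(y)` is symmetric, hence antisymmetric because its values are 2-torsion, so it factors
through `∧²F*` and takes the value `1` on `f ∧ (-f)`. As `δ_F` kills `R_5(F)` and sends
`[f] + [f⁻¹]` to `f ∧ (-f)`, the element `[f] + [f⁻¹]` is not in `R_5(F)`.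
-/

theorem exists_dual_ne_zero_and_ne_zero (R : Type*) {M : Type*} [Semiring R] [AddCommMonoid M]
    [Module R M] [Module.Projective R M] {x y : M} (hx : x ≠ 0) (hy : y ≠ 0) :
    ∃ φ : M →ₗ[R] R, φ x ≠ 0 ∧ φ y ≠ 0 := by
  obtain ⟨φ, hφx⟩ := Module.Projective.exists_dual_ne_zero R hx
  obtain ⟨ψ, hψy⟩ := Module.Projective.exists_dual_ne_zero R hy
  by_cases hφy : φ y = 0
  · by_cases hψx : ψ x = 0
    · exact ⟨φ + ψ, by simpa [hψx] using hφx, by simpa [hφy] using hψy⟩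
    · exact ⟨ψ, hψx, hψy⟩
  · exact ⟨φ, hφx, hφy⟩

theorem modN_mkQ_eq_zero_iff {A : Type*} [AddCommGroup A] {n : ℕ} {a : A} :
    ModN.mkQ n a = 0 ↔ ∃ b, n • b = a := by
  simp [ModN.mkQ]

theorem exists_addMonoidHom_zmod_two_eq_one {A : Type*} [AddCommGroup A] {a b : A}
    (ha : ¬Even a) (hb : ¬Even b) : ∃ φ : A →+ ZMod 2, φ a = 1 ∧ φ b = 1 := by
  have mkQ_ne_zero {c : A} (hc : ¬Even c) : ModN.mkQ 2 c ≠ 0 := fun h =>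
    have ⟨d, hd⟩ := modN_mkQ_eq_zero_iff.mp h
    hc ⟨d, by rw [← hd, two_nsmul]⟩
  obtain ⟨φ, hφa, hφb⟩ :=
    exists_dual_ne_zero_and_ne_zero (ZMod 2) (mkQ_ne_zero ha) (mkQ_ne_zero hb)
  have eq_one : ∀ u : ZMod 2, u ≠ 0 → u = 1 := by decide
  exact ⟨φ.toAddMonoidHom.comp (ModN.mkQ 2), eq_one _ hφa, eq_one _ hφb⟩

section Wedge

variable {F : Type*} [Field F]

theorem wedge_mul_left (x y z : Fˣ) : wedge (x * y) z = wedge x z + wedge y z :=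
  congrArg (QuotientAddGroup.mk' (symRel F)) (TensorProduct.add_tmul _ _ _)

theorem wedge_mul_right (x y z : Fˣ) : wedge x (y * z) = wedge x y + wedge x z :=
  congrArg (QuotientAddGroup.mk' (symRel F)) (TensorProduct.tmul_add _ _ _)

theorem wedge_inv_left (x y : Fˣ) : wedge x⁻¹ y = -wedge x y :=
  congrArg (QuotientAddGroup.mk' (symRel F)) (TensorProduct.neg_tmul _ _)

theorem wedge_inv_right (x y : Fˣ) : wedge x y⁻¹ = -wedge x y :=
  congrArg (QuotientAddGroup.mk' (symRel F)) (TensorProduct.tmul_neg _ _)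

theorem wedge_swap (x y : Fˣ) : wedge x y = -wedge y x :=
  eq_neg_of_add_eq_zero_left <|
    (QuotientAddGroup.eq_zero_iff _).mpr (AddSubgroup.subset_closure ⟨x, y, rfl⟩)

/-- The homomorphism out of `∧²F*` induced by an antisymmetric bilinear map on `F*`. -/
noncomputable def wedgeLift {A : Type*} [AddCommGroup A]
    (B : Additive Fˣ →ₗ[ℤ] Additive Fˣ →ₗ[ℤ] A) (hB : ∀ x y, B x y + B y x = 0) :
    Wedge F →+ A :=
  QuotientAddGroup.lift (symRel F) (TensorProduct.lift B).toAddMonoidHom <|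
    (AddSubgroup.closure_le _).mpr <| by
      rintro _ ⟨x, y, rfl⟩
      simpa using hB (Additive.ofMul x) (Additive.ofMul y)

theorem wedgeLift_wedge {A : Type*} [AddCommGroup A]
    (B : Additive Fˣ →ₗ[ℤ] Additive Fˣ →ₗ[ℤ] A) (hB : ∀ x y, B x y + B y x = 0) (x y : Fˣ) :
    wedgeLift B hB (wedge x y) = B (Additive.ofMul x) (Additive.ofMul y) :=
  TensorProduct.lift.tmul _ _

theorem wedge_ne_zero {x y : Fˣ} (hx : ¬IsSquare x) (hy : ¬IsSquare y) : wedge x y ≠ 0 := by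
  obtain ⟨φ, hφx, hφy⟩ := exists_addMonoidHom_zmod_two_eq_one
    (even_ofMul_iff.not.mpr hx) (even_ofMul_iff.not.mpr hy)
  let B := (LinearMap.mul ℤ (ZMod 2)).compl₁₂ φ.toIntLinearMap φ.toIntLinearMap
  have hB (u v) : B u v + B v u = 0 := by
    change φ u * φ v + φ v * φ u = 0
    rw [mul_comm (φ v), CharTwo.add_self_eq_zero]
  have hBxy : B (Additive.ofMul x) (Additive.ofMul y) = 1 := by
    change φ _ * φ _ = 1
    rw [hφx, hφy, mul_one]
  intro hxy
  rw [← wedgeLift_wedge B hB, hxy, map_zero] at hBxy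
  exact zero_ne_one hBxy

theorem wedge_five_term (x y u v w : Fˣ) :
    wedge x u - wedge y v + wedge (y / x) (w / x) + wedge (u / v) (w / v)
      - wedge (y * u / (x * v)) (w / (x * v)) = 0 := by
  simp only [div_eq_mul_inv, mul_inv, wedge_mul_left, wedge_mul_right, wedge_inv_left,
    wedge_inv_right]
  rw [wedge_swap u x, wedge_swap v x]
  abel

end Wedge

section Suslin

variable {F : Type*} [Field F]

theorem dlt_of_eq_wedge {x : Flat F} {p q : Fˣ} (hp : x.1 = p) (hq : 1 - x.1 = q) :
    dlt F (FreeAbelianGroup.of x) = wedge p q := by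
  obtain rfl : unitsOf x = p := Units.ext hp
  obtain rfl : unitsOneSub x = q := Units.ext hq
  exact FreeAbelianGroup.lift_apply_of _ _

theorem dlt_invEl (x : Flat F) :
    dlt F (invEl x) = wedge (unitsOf x) (Units.mk0 (-x.1) (neg_ne_zero.mpr x.2.1)) := by
  let y : Flat F := ⟨x.1⁻¹, flat_inv x⟩
  have one_sub_eq : 1 - x.1 = -x.1 * (1 - x.1⁻¹) := by
    field_simp [x.2.1]
    ring
  have dlt_x : dlt F (FreeAbelianGroup.of x) =
      wedge (unitsOf x) (Units.mk0 (-x.1) (neg_ne_zero.mpr x.2.1) * unitsOneSub y) :=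
    dlt_of_eq_wedge rfl one_sub_eq
  have dlt_y : dlt F (FreeAbelianGroup.of y) = wedge (unitsOf x)⁻¹ (unitsOneSub y) :=
    dlt_of_eq_wedge (Units.val_inv_eq_inv_val (unitsOf x)).symm rfl
  change dlt F (FreeAbelianGroup.of x + FreeAbelianGroup.of y) = _
  rw [map_add, dlt_x, dlt_y, wedge_mul_right, wedge_inv_left]
  abel

theorem one_sub_inv_div_one_sub_inv {x y : F} (hx : x ≠ 0) (hy : y ≠ 0) :
    (1 - x⁻¹) / (1 - y⁻¹) = y * (1 - x) / (x * (1 - y)) := by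
  have one_sub_inv {z : F} (hz : z ≠ 0) : 1 - z⁻¹ = -((1 - z) / z) := by
    field_simp
    ring
  rw [one_sub_inv hx, one_sub_inv hy, neg_div_neg_eq, div_div_div_eq, mul_comm (1 - x)]

theorem dlt_fiveEl (x y : Flat F) (h : x ≠ y) : dlt F (fiveEl x y h) = 0 := by
  have hx : x.1 ≠ 0 := x.2.1
  have hy' : 1 - y.1 ≠ 0 := (unitsOneSub y).ne_zero
  let a := unitsOf x
  let b := unitsOf y
  let c := unitsOneSub x
  let d := unitsOneSub y
  let e : Fˣ := Units.mk0 (x.1 - y.1) (sub_ne_zero_of_ne fun hxy => h (Subtype.ext hxy))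
  have ratio_eq := one_sub_inv_div_one_sub_inv hx y.2.1
  have dlt_div : dlt F (FreeAbelianGroup.of ⟨y.1 / x.1, flat_div x y h⟩)
      = wedge (b / a) (e / a) :=
    dlt_of_eq_wedge (by simp [a, b, unitsOf]) (by simp [a, e, unitsOf, sub_div, hx])
  have dlt_sub : dlt F (FreeAbelianGroup.of ⟨(1 - x.1) / (1 - y.1), flat_sub x y h⟩)
      = wedge (c / d) (e / d) :=
    dlt_of_eq_wedge (by simp [c, d, unitsOneSub])
      (by simp only [e, d, unitsOneSub, Units.val_div_eq_div_val, Units.val_mk0]; field_simp; ring)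
  have dlt_subinv :
      dlt F (FreeAbelianGroup.of ⟨(1 - x.1⁻¹) / (1 - y.1⁻¹), flat_subinv x y h⟩)
        = wedge (b * c / (a * d)) (e / (a * d)) :=
    dlt_of_eq_wedge (by simp [ratio_eq, a, b, c, d, unitsOf, unitsOneSub])
      (by
        simp only [ratio_eq, e, a, d, unitsOf, unitsOneSub, Units.val_div_eq_div_val,
          Units.val_mul, Units.val_mk0]
        field_simp
        ring)
  rw [fiveEl, map_sub, map_add, map_add, map_sub, dlt_div, dlt_sub, dlt_subinv,
    dlt_of_eq_wedge (x := x) (p := a) (q := c) rfl rfl,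
    dlt_of_eq_wedge (x := y) (p := b) (q := d) rfl rfl]
  exact wedge_five_term a b c d e

variable (F) in
theorem R5_le_ker_dlt : R5 F ≤ (dlt F).ker :=
  (AddSubgroup.closure_le _).mpr <| by
    rintro _ ⟨x, y, h, rfl⟩
    exact dlt_fiveEl x y h

theorem invEl_not_in_R5_general (f : Flat F) (hf : ¬IsSquare f.1) (hf_neg : ¬IsSquare (-f.1)) :
    dlt F (invEl f) = wedge (unitsOf f) (Units.mk0 (-f.1) (neg_ne_zero.mpr f.2.1)) ∧
    wedge (unitsOf f) (Units.mk0 (-f.1) (neg_ne_zero.mpr f.2.1)) ≠ 0 ∧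
    invEl f ∉ R5 F := by
  have hne : wedge (unitsOf f) (Units.mk0 (-f.1) (neg_ne_zero.mpr f.2.1)) ≠ 0 :=
    wedge_ne_zero (fun h => hf (h.map (Units.coeHom F))) fun h => hf_neg (h.map (Units.coeHom F))
  exact ⟨dlt_invEl f, hne, fun hmem => hne <| dlt_invEl f ▸ R5_le_ker_dlt F hmem⟩

end Suslin

/-- Let `k` be a field, `n ≥ 1`, `K = k(t₁,…,tₙ)`, and `f ∈ K ∖ {0,1}` such that `c·f` is
not a square in `K` for any `c ∈ k*`.  Then `δ_K([f] + [f⁻¹]) = f ∧ (−f) ≠ 0` in `∧²K*`;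
in particular `[f] + [f⁻¹]` does not lie in `R_5(K)`. -/
theorem invEl_not_in_R5 (k : Type*) [Field k] (n : ℕ) (hn : 1 ≤ n)
    (f : FractionRing (MvPolynomial (Fin n) k)) (hf0 : f ≠ 0) (hf1 : f ≠ 1)
    (hsq : ∀ c : k, c ≠ 0 → ∀ g : FractionRing (MvPolynomial (Fin n) k),
      algebraMap (MvPolynomial (Fin n) k) (FractionRing (MvPolynomial (Fin n) k))
          (MvPolynomial.C c) * f ≠ g ^ 2) :
    dlt (FractionRing (MvPolynomial (Fin n) k)) (invEl ⟨f, hf0, hf1⟩)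
        = wedge (Units.mk0 f hf0) (Units.mk0 (-f) (neg_ne_zero.mpr hf0)) ∧
    wedge (Units.mk0 f hf0) (Units.mk0 (-f) (neg_ne_zero.mpr hf0)) ≠ 0 ∧
    invEl ⟨f, hf0, hf1⟩ ∉ R5 (FractionRing (MvPolynomial (Fin n) k)) := by
  exact invEl_not_in_R5_general ⟨f, hf0, hf1⟩ (fun ⟨g, hg⟩ => hsq 1 one_ne_zero g (by simpa [sq]))
    fun ⟨g, hg⟩ => hsq (-1) (neg_ne_zero.mpr one_ne_zero) g (by simpa [sq])

end BlochPaper
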